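/- Let m ∈ ℕ with m ≥ 1 and let A ⊆ ℕ^m. Then the following are equivalent: (1) there exist functions α : 𝒫_f(ℕ^ℕ) → ℕ and H : 𝒫_f(ℕ^ℕ) → 𝒫_f(ℕ) such that (a) whenever F, G ∈ 𝒫_f(ℕ^ℕ) and F ⊊ G one has max H(F) < min H(G), and (b) whenever n ≥ m, G₁ ⊊ G₂ ⊊ ⋯ ⊊ G_n in 𝒫_f(ℕ^ℕ), f_i ∈ G_i for each i ∈ {1,…,n}, and β₁ < β₂ < ⋯ < β_m are nonempty subsets of {1,…,n}, the tuple (Σ_{i∈β₁}(α(G_i)+Σ_{t∈H(G_i)}f_i(t)), …, Σ_{i∈β_m}(α(G_i)+Σ_{t∈H(G_i)}f_i(t))) belongs to A; (2) there exists an idempotent ultrafilter p ∈ 𝒥 such that A ∈ ⊗_{i=1}^m p. -/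

import Mathlib

namespace MultiCST

/-- The sum `p + q` of ultrafilters on ℕ: `A ∈ p + q` iff `{x : {y : x+y ∈ A} ∈ q} ∈ p`. -/
def uAdd (p q : Ultrafilter ℕ) : Ultrafilter ℕ :=
  p.bind fun x => q.map fun y => x + y

/-- `A ⊆ ℕ` is a J-set. -/
def IsJSet (A : Set ℕ) : Prop :=
  ∀ F : Finset (ℕ → ℕ), F.Nonempty →
    ∃ (a : ℕ) (β : Finset ℕ), β.Nonempty ∧ ∀ f ∈ F, a + ∑ t ∈ β, f t ∈ A

/-- `p ∈ 𝒥`: every member of `p` is a J-set. -/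
def MemJ (p : Ultrafilter ℕ) : Prop := ∀ A : Set ℕ, A ∈ p → IsJSet A

/-- `p` is an idempotent ultrafilter. -/
def IdempotentUF (p : Ultrafilter ℕ) : Prop := uAdd p p = p

/-- `p` is a minimal idempotent ultrafilter. -/
def IsMinimalIdempotent (p : Ultrafilter ℕ) : Prop :=
  IdempotentUF p ∧
    ∀ q : Ultrafilter ℕ, IdempotentUF q → uAdd q p = q → uAdd p q = q → q = p

/-- Tensor product `⊗_{i=1}^m p_i` of ultrafilters on ℕ, as an ultrafilter on `Fin m → ℕ`. -/
def tensor : ∀ m : ℕ, (Fin m → Ultrafilter ℕ) → Ultrafilter (Fin m → ℕ)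
  | 0, _ => pure fun i => i.elim0
  | m + 1, p =>
      (p 0).bind fun x => (tensor m fun i => p i.succ).map fun v => Fin.cons x v

/-- `f : ℕ → ℕ` is (given by) a polynomial with coefficients in ℕ and zero constant term. -/
def IsPolyZeroConst (f : ℕ → ℕ) : Prop :=
  ∃ P : Polynomial ℕ, P.coeff 0 = 0 ∧ ∀ x, f x = P.eval x

/-- The linear combination `a₁·p₁ + a₂·p₂ + ⋯ + a_m·p_m` of ultrafilters on ℕ. -/
def linComb : ∀ m : ℕ, (Fin m → ℕ) → (Fin m → Ultrafilter ℕ) → Ultrafilter ℕ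
  | 0, _, _ => pure 0
  | m + 1, a, p =>
      uAdd ((p 0).map fun x => a 0 * x)
        (linComb m (fun i => a i.succ) fun i => p i.succ)


/-!
(1) ⇒ (2): the sums of the values `α(G) + ∑ t ∈ H(G), f t` along chains above `F` form a J-set
`C F`, and every `x ∈ C F` satisfies `x + C G ⊆ C F` for some `G`. Since J-sets are partition
regular, by the Hales–Jewett theorem, the ultrafilters in `𝒥` containing every `C F` form a
nonempty compact semigroup, and the Ellis–Numakura lemma gives an idempotent `p` among them.
Peeling off one block at a time shows that `A` is in the tensor power of `p`.

(2) ⇒ (1): iterating Galvin's `B⋆` construction turns membership of `A` in the tensor power of `p`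
into a tree of sequences, with `p`-many extensions at every node, such that cutting a branch into
`m` blocks gives block sums in `A`. Recursion along `⊂` then chooses `α(F)` and `H(F)` so that the
values along every chain stay in the tree: only finitely many nodes have to be extended at each
step, so the extensions form a member of `p`, hence a J-set.
-/
section JSets

theorem IsJSet.mono {A B : Set ℕ} (hA : IsJSet A) (hAB : A ⊆ B) : IsJSet B := fun F hF =>
  let ⟨a, β, hβ, h⟩ := hA F hF
  ⟨a, β, hβ, fun f hf => hAB (h f hf)⟩

theorem not_isJSet_empty : ¬ IsJSet ∅ := fun h =>
  let ⟨_, _, _, h⟩ := h {0} (Finset.singleton_nonempty 0)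
  h 0 (Finset.mem_singleton_self 0)

theorem IsJSet.of_add_left {A : Set ℕ} (x : ℕ) (hA : IsJSet {y | x + y ∈ A}) : IsJSet A :=
  fun F hF =>
    let ⟨a, β, hβ, h⟩ := hA F hF
    ⟨x + a, β, hβ, fun f hf => (add_assoc x a _).symm ▸ h f hf⟩

theorem IsJSet.exists_forall_lt {A : Set ℕ} (hA : IsJSet A) (F : Finset (ℕ → ℕ)) (N : ℕ) :
    ∃ (a : ℕ) (β : Finset ℕ),
      β.Nonempty ∧ (∀ t ∈ β, N < t) ∧ ∀ f ∈ F, a + ∑ t ∈ β, f t ∈ A := by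
  classical
  let shift (f : ℕ → ℕ) (t : ℕ) : ℕ := f (t + (N + 1))
  obtain ⟨a, β, hβ, h⟩ := hA (insert 0 (F.image shift)) (Finset.insert_nonempty _ _)
  refine ⟨a, β.map (addRightEmbedding (N + 1)), hβ.map, fun t ht => ?_, fun f hf => ?_⟩
  · obtain ⟨u, -, rfl⟩ := Finset.mem_map.1 ht
    exact Nat.lt_of_lt_of_le N.lt_succ_self (Nat.le_add_left _ _)
  · rw [Finset.sum_map]
    exact h (shift f) (Finset.mem_insert_of_mem (Finset.mem_image_of_mem shift hf))

theorem exists_sum_line_apply_eq {κ ι M : Type*} [Fintype ι] [AddCommMonoid M]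
    (l : Combinatorics.Line κ ι) (φ : ι → κ → M) :
    ∃ (c : M) (V : Finset ι), V.Nonempty ∧ ∀ k, ∑ i, φ i (l k i) = c + ∑ i ∈ V, φ i k := by
  classical
  let V : Finset ι := {i | l.idxFun i = none}
  obtain ⟨i₀, hi₀⟩ := l.proper
  refine ⟨∑ i ∈ Vᶜ, ((l.idxFun i).map (φ i)).getD 0, V, ⟨i₀, by simpa [V] using hi₀⟩,
    fun k => ?_⟩
  rw [← Finset.sum_compl_add_sum V]
  congr 1
  · refine Finset.sum_congr rfl fun i hi => ?_
    obtain ⟨c, hc⟩ := Option.ne_none_iff_exists'.1 (show l.idxFun i ≠ none by simpa [V] using hi)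
    simp [hc]
  · refine Finset.sum_congr rfl fun i hi => ?_
    rw [l.apply_none _ _ (by simpa [V] using hi)]

-- The Hales–Jewett theorem over the alphabet `F`: a word `w` becomes the function
-- `t ↦ ∑ i, w i (e (t, i))`, and the active coordinates `V` of a monochromatic line turn
-- `β` into the image of `β × V` under `e`.
theorem IsJSet.exists_monochromatic {κ : Type} [Finite κ] {A : Set ℕ} (hA : IsJSet A)
    (color : ℕ → κ) {F : Finset (ℕ → ℕ)} (hF : F.Nonempty) :
    ∃ (a : ℕ) (β : Finset ℕ) (c : κ), β.Nonempty ∧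
      ∀ f ∈ F, a + ∑ t ∈ β, f t ∈ A ∧ color (a + ∑ t ∈ β, f t) = c := by
  classical
  obtain ⟨ι, _, hι⟩ := Combinatorics.Line.exists_mono_in_high_dimension F κ
  let _ : Encodable ι := Fintype.toEncodable ι
  let e : ℕ × ι → ℕ := Encodable.encode
  let g (w : ι → F) (t : ℕ) : ℕ := ∑ i, (w i).1 (e (t, i))
  have : Nonempty F := hF.to_subtype
  obtain ⟨a, β, hβ, hg⟩ := hA (Finset.univ.image g) (Finset.univ_nonempty.image g)
  obtain ⟨l, c, hc⟩ := hι fun w => color (a + ∑ t ∈ β, g w t)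
  obtain ⟨b, V, hV, hline⟩ := exists_sum_line_apply_eq l fun i (f : F) => ∑ t ∈ β, f.1 (e (t, i))
  have hsum (f : F) : a + ∑ t ∈ β, g (l f) t = a + b + ∑ u ∈ (β ×ˢ V).image e, f.1 u := by
    rw [Finset.sum_image Encodable.encode_injective.injOn, Finset.sum_product_right, add_assoc,
      ← hline f, Finset.sum_comm]
  refine ⟨a + b, (β ×ˢ V).image e, c, (hβ.product hV).image e, fun f hf => ?_⟩
  rw [← hsum ⟨f, hf⟩]
  exact ⟨hg _ (Finset.mem_image_of_mem g (Finset.mem_univ _)), hc ⟨f, hf⟩⟩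

theorem IsJSet.or_of_union {A B : Set ℕ} (h : IsJSet (A ∪ B)) : IsJSet A ∨ IsJSet B := by
  classical
  by_contra! hcon
  simp only [IsJSet, not_forall] at hcon
  obtain ⟨⟨F₁, hF₁, hA⟩, F₂, -, hB⟩ := hcon
  obtain ⟨a, β, c, hβ, hmono⟩ :=
    h.exists_monochromatic (· ∈ A) (hF₁.mono (Finset.subset_union_left (s₂ := F₂)))
  by_cases hc : c
  · exact hA ⟨a, β, hβ, fun f hf =>
      (hmono f (Finset.mem_union_left _ hf)).2.mpr hc⟩
  · exact hB ⟨a, β, hβ, fun f hf =>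
      let ⟨hAB, hfc⟩ := hmono f (Finset.mem_union_right _ hf)
      hAB.resolve_left fun hfA => hc (hfc.mp hfA)⟩

/-- The filter of complements of sets that are not J-sets; the ultrafilters finer than it are
exactly the elements of `𝒥`. -/
def jFilter : Filter ℕ :=
  Filter.comk (fun A => ¬ IsJSet A) not_isJSet_empty (fun _ hA _ hBA hB => hA (hB.mono hBA))
    fun _ hA _ hB h => h.or_of_union.elim hA hB

theorem mem_jFilter {A : Set ℕ} : A ∈ jFilter ↔ ¬ IsJSet Aᶜ := Filter.mem_comk

theorem memJ_iff_le_jFilter {p : Ultrafilter ℕ} : MemJ p ↔ (p : Filter ℕ) ≤ jFilter := by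
  refine ⟨fun h A hA => ?_, fun h A hA => ?_⟩
  · by_contra hpA
    exact mem_jFilter.1 hA (h _ (Ultrafilter.compl_mem_iff_notMem.2 hpA))
  · by_contra hJ
    exact Ultrafilter.compl_mem_iff_notMem.1 (h (mem_jFilter.2 (by rwa [compl_compl]))) hA

theorem IsJSet.neBot_jFilter_inf_principal {A : Set ℕ} (hA : IsJSet A) :
    (jFilter ⊓ Filter.principal A).NeBot := by
  refine Filter.inf_principal_neBot_iff.2 fun U hU => ?_
  by_contra hUA
  exact mem_jFilter.1 hU (hA.mono fun x hxA hxU => hUA ⟨x, hxU, hxA⟩)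

theorem eventually_add_mem_of_mem_jFilter {A : Set ℕ} (hA : A ∈ jFilter) (x : ℕ) :
    ∀ᶠ y in jFilter, x + y ∈ A :=
  mem_jFilter.2 fun h => mem_jFilter.1 hA (h.of_add_left x)

end JSets

section Idempotents

attribute [local instance] Ultrafilter.add Ultrafilter.addSemigroup

theorem exists_idempotent_ultrafilter_le {M : Type*} [AddSemigroup M] {𝓕 : Filter M} [𝓕.NeBot]
    (hadd : ∀ A ∈ 𝓕, ∀ᶠ x in 𝓕, ∀ᶠ y in 𝓕, x + y ∈ A) :
    ∃ p : Ultrafilter M, p + p = p ∧ (p : Filter M) ≤ 𝓕 := by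
  let K : Set (Ultrafilter M) := {p | (p : Filter M) ≤ 𝓕}
  have hK_closed : IsClosed K := by
    have : K = ⋂ A ∈ 𝓕, {p : Ultrafilter M | A ∈ p} := by
      ext p
      simp only [Set.mem_iInter]
      rfl
    rw [this]
    exact isClosed_biInter fun A _ => ultrafilter_isClosed_basic A
  obtain ⟨p, hpK, hp⟩ := exists_idempotent_in_compact_add_subsemigroup
    Ultrafilter.continuous_add_left K ⟨Ultrafilter.of 𝓕, Ultrafilter.of_le 𝓕⟩ hK_closed.isCompact
    fun p hp q hq A hA => (Ultrafilter.eventually_add p q (· ∈ A)).2 <|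
      Filter.mem_of_superset (hp (hadd A hA)) fun _ hx => hq hx
  exact ⟨p, hp, hpK⟩

/-- The set `B⋆` of the `x ∈ B` whose translate `-x + B` belongs to `p`. -/
def starSet {M : Type*} [Add M] (p : Ultrafilter M) (B : Set M) : Set M :=
  {x | x ∈ B ∧ ∀ᶠ y in (p : Filter M), x + y ∈ B}

variable {M : Type*} [AddSemigroup M] {p : Ultrafilter M} {B : Set M}

theorem starSet_mem (hp : p + p = p) (hB : B ∈ p) : starSet p B ∈ p :=
  Filter.inter_mem hB ((Ultrafilter.eventually_add p p (· ∈ B)).1 (by rwa [hp]))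

theorem eventually_add_mem_starSet (hp : p + p = p) {x : M} (hx : x ∈ starSet p B) :
    ∀ᶠ y in (p : Filter M), x + y ∈ starSet p B := by
  have h : {y | x + y ∈ B} ∈ p := hx.2
  filter_upwards [starSet_mem hp h] with y hy
  exact ⟨hy.1, hy.2.mono fun z hz => by rwa [add_assoc]⟩

theorem exists_idempotent_memJ {ι : Type*} [Preorder ι] [IsDirectedOrder ι] [Nonempty ι]
    {C : ι → Set ℕ} (hanti : Antitone C) (hJ : ∀ i, IsJSet (C i))
    (hadd : ∀ i, ∀ x ∈ C i, ∃ j, ∀ y ∈ C j, x + y ∈ C i) :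
    ∃ p : Ultrafilter ℕ, IdempotentUF p ∧ MemJ p ∧ ∀ i, C i ∈ p := by
  let 𝓕 : Filter ℕ := ⨅ i, jFilter ⊓ Filter.principal (C i)
  have hdir : Directed (· ≥ ·) fun i => jFilter ⊓ Filter.principal (C i) :=
    Antitone.directed_ge fun _ _ hij =>
      inf_le_inf_left _ (Filter.principal_mono.2 (hanti hij))
  have : 𝓕.NeBot :=
    Filter.iInf_neBot_of_directed' hdir fun i => (hJ i).neBot_jFilter_inf_principal
  have hC (i) : C i ∈ 𝓕 :=
    Filter.mem_iInf_of_mem i (Filter.mem_inf_of_right (Filter.mem_principal_self _))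
  have hle : 𝓕 ≤ jFilter := iInf_le_of_le (Classical.arbitrary ι) inf_le_left
  obtain ⟨p, hp, hp𝓕⟩ := exists_idempotent_ultrafilter_le (𝓕 := 𝓕) fun A hA => by
    obtain ⟨i, hi⟩ := (Filter.mem_iInf_of_directed hdir A).1 hA
    rw [Filter.mem_inf_principal] at hi
    filter_upwards [hC i] with x hx
    obtain ⟨j, hj⟩ := hadd i x hx
    filter_upwards [hC j, hle (eventually_add_mem_of_mem_jFilter hi x)] with y hy hxy
    exact hxy (hj y hy)
  exact ⟨p, hp, memJ_iff_le_jFilter.2 (hp𝓕.trans hle), fun i => hp𝓕 (hC i)⟩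

end Idempotents

section Tensor

theorem mem_tensor_zero {A : Set (Fin 0 → ℕ)} {p : Fin 0 → Ultrafilter ℕ} (v : Fin 0 → ℕ) :
    A ∈ tensor 0 p ↔ v ∈ A := by
  rw [Subsingleton.elim v fun i => i.elim0]
  rfl

theorem mem_tensor_succ {m : ℕ} {p : Fin (m + 1) → Ultrafilter ℕ} {A : Set (Fin (m + 1) → ℕ)} :
    A ∈ tensor (m + 1) p ↔ ∀ᶠ x in (p 0 : Filter ℕ),
      {v : Fin m → ℕ | (Fin.cons x v : Fin (m + 1) → ℕ) ∈ A} ∈ tensor m fun i => p i.succ :=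
  Iff.rfl

end Tensor

section Chains

variable {ι M : Type*}

/-- A strictly increasing chain of finite sets, all strictly above `F`, with a member selected
from each: the list of the pairs (set, selected member). -/
def IsChainAbove (F : Finset ι) (L : List (Finset ι × ι)) : Prop :=
  L.Pairwise (fun q q' => q.1 ⊂ q'.1) ∧ ∀ q ∈ L, F ⊂ q.1 ∧ q.2 ∈ q.1

/-- The sums of `val` along nonempty chains strictly above `F`. -/
def chainSums [AddMonoid M] (val : Finset ι × ι → M) (F : Finset ι) : Set M :=
  {x | ∃ L, L ≠ [] ∧ IsChainAbove F L ∧ (L.map val).sum = x}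

/-- Every chain above `F` that is cut into `m` consecutive nonempty blocks has its tuple of
block sums in `A`. -/
def ContainsBlockSums [AddMonoid M] {m : ℕ} (val : Finset ι × ι → M) (F : Finset ι)
    (A : Set (Fin m → M)) : Prop :=
  ∀ s : Fin m → List (Finset ι × ι), (∀ l, s l ≠ []) → IsChainAbove F (List.ofFn s).flatten →
    (fun l => ((s l).map val).sum) ∈ A

theorem IsChainAbove.mono {F G : Finset ι} {L : List (Finset ι × ι)} (hL : IsChainAbove G L)
    (hFG : F ⊆ G) : IsChainAbove F L :=
  ⟨hL.1, fun q hq => ⟨hFG.trans_ssubset (hL.2 q hq).1, (hL.2 q hq).2⟩⟩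

theorem IsChainAbove.exists_append {F : Finset ι} {L : List (Finset ι × ι)}
    (hL : IsChainAbove F L) : ∃ G, ∀ L', IsChainAbove G L' → IsChainAbove F (L ++ L') := by
  classical
  let top : Finset ι := F ∪ L.toFinset.sup Prod.fst
  have hle {q} (hq : q ∈ L) : q.1 ⊆ top :=
    (Finset.le_sup (f := Prod.fst) (List.mem_toFinset.2 hq)).trans Finset.subset_union_right
  refine ⟨top, fun L' hL' => ⟨List.pairwise_append.2 ⟨hL.1, hL'.1, fun q hq q' hq' =>
    (hle hq).trans_ssubset (hL'.2 q' hq').1⟩, fun q hq => ?_⟩⟩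
  exact (List.mem_append.1 hq).elim (hL.2 q) ((hL'.mono Finset.subset_union_left).2 q)

theorem antitone_chainSums [AddMonoid M] (val : Finset ι × ι → M) : Antitone (chainSums val) :=
  fun _ _ hFG _ ⟨L, hne, hL, hsum⟩ => ⟨L, hne, hL.mono hFG, hsum⟩

theorem exists_add_mem_chainSums [AddMonoid M] {val : Finset ι × ι → M} {F : Finset ι} {x : M}
    (hx : x ∈ chainSums val F) : ∃ G, ∀ y ∈ chainSums val G, x + y ∈ chainSums val F := by
  obtain ⟨L, hne, hL, rfl⟩ := hx
  obtain ⟨G, hG⟩ := hL.exists_append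
  refine ⟨G, ?_⟩
  rintro _ ⟨L', -, hL', rfl⟩
  exact ⟨L ++ L', List.append_ne_nil_of_left_ne_nil hne L', hG L' hL', by simp⟩

theorem ContainsBlockSums.mem_tensor {val : Finset ι × ι → ℕ} :
    ∀ {m : ℕ} {p : Fin m → Ultrafilter ℕ} {F : Finset ι} {A : Set (Fin m → ℕ)},
      ContainsBlockSums val F A → (∀ i G, chainSums val G ∈ p i) → A ∈ tensor m p
  | 0, _, _, _, hA, _ => (mem_tensor_zero _).2 <|
      hA (fun i => i.elim0) (fun i => i.elim0) ⟨List.Pairwise.nil, by simp⟩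
  | m + 1, p, F, A, hA, hp => by
    rw [mem_tensor_succ]
    filter_upwards [hp 0 F]
    rintro _ ⟨L, hne, hL, rfl⟩
    obtain ⟨G, hG⟩ := hL.exists_append
    refine mem_tensor (F := G) (fun s hs hsG => ?_) fun i => hp i.succ
    have := hA (Fin.cons L s) (Fin.cases hne hs) (by simpa [List.ofFn_succ] using hG _ hsG)
    rw [Set.mem_ofPred_eq]
    convert this using 1
    funext l
    cases l using Fin.cases <;> rfl

theorem sum_filter_get_mem [AddCommMonoid M] {X : Type*} {L S : List X} [DecidablePred (· ∈ S)]
    (hL : L.Nodup) (hS : S.Sublist L) (f : X → M) :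
    ∑ i : Fin L.length with L.get i ∈ S, f (L.get i) = (S.map f).sum := by
  classical
  rw [← List.sum_toFinset f (hL.sublist hS),
    ← Finset.sum_image (f := f) (List.nodup_iff_injective_get.1 hL).injOn]
  congr 1
  ext x
  simp only [Finset.mem_image, Finset.mem_filter, Finset.mem_univ, true_and, List.mem_toFinset]
  constructor
  · rintro ⟨i, hi, rfl⟩
    exact hi
  · intro hx
    obtain ⟨i, rfl⟩ := List.get_of_mem (hS.subset hx)
    exact ⟨i, hx, rfl⟩

theorem le_length_flatten_ofFn {X : Type*} {m : ℕ} {s : Fin m → List X} (hs : ∀ l, s l ≠ []) :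
    m ≤ (List.ofFn s).flatten.length := by
  rw [List.length_flatten, List.map_ofFn, List.sum_ofFn]
  simpa using Finset.card_nsmul_le_sum Finset.univ (fun l => (s l).length) 1
    fun l _ => List.length_pos_iff.2 (hs l)

theorem sum_map_sort [AddCommMonoid M] {X : Type*} [LinearOrder X] (β : Finset X)
    (f : X → M) : (β.sort.map f).sum = ∑ i ∈ β, f i := by
  rw [← List.sum_toFinset f (β.sort_nodup _), Finset.sort_toFinset]

theorem ContainsBlockSums.sum_mem [AddCommMonoid M] {m n : ℕ} {val : Finset ι × ι → M}
    {A : Set (Fin m → M)} (hA : ContainsBlockSums val ∅ A) {G : Fin n → Finset ι}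
    (hG : StrictMono G) {f : Fin n → ι} (hf : ∀ i, f i ∈ G i) {β : Fin m → Finset (Fin n)}
    (hβ : ∀ l, (β l).Nonempty) (hββ : ∀ l l', l < l' → ∀ x ∈ β l, ∀ y ∈ β l', x < y) :
    (fun l => ∑ i ∈ β l, val (G i, f i)) ∈ A := by
  have hpair : (List.ofFn fun l => (β l).sort.map fun i => (G i, f i)).flatten.Pairwise
      fun q q' => q.1 ⊂ q'.1 := by
    simp only [List.pairwise_flatten, List.forall_mem_ofFn_iff, List.pairwise_map,
      List.pairwise_ofFn]
    refine ⟨fun l => ((β l).sortedLT_sort.pairwise).imp fun h => hG h, ?_⟩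
    intro l l' hll
    simp only [List.mem_map, Finset.mem_sort]
    rintro _ ⟨x, hx, rfl⟩ _ ⟨y, hy, rfl⟩
    exact hG (hββ l l' hll x hx y hy)
  have := hA (fun l => (β l).sort.map fun i => (G i, f i)) (fun l hl => ?_) ⟨hpair, ?_⟩
  · simpa only [List.map_map, Function.comp_def, sum_map_sort] using this
  · obtain ⟨i, hi⟩ := hβ l
    simpa [List.map_eq_nil_iff.1 hl] using (Finset.mem_sort (· ≤ ·)).2 hi
  · simp only [List.mem_flatten, List.mem_ofFn]
    rintro _ ⟨_, ⟨l, rfl⟩, hq⟩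
    obtain ⟨i, -, rfl⟩ := List.mem_map.1 hq
    exact ⟨Finset.empty_ssubset.2 ⟨_, hf i⟩, hf i⟩

theorem containsBlockSums_of_forall_sum_mem [AddCommMonoid M] {m : ℕ} {val : Finset ι × ι → M}
    {A : Set (Fin m → M)}
    (hA : ∀ n, m ≤ n → ∀ G : Fin n → Finset ι, (∀ i, (G i).Nonempty) → (∀ i j, i < j → G i ⊂ G j) →
      ∀ f : Fin n → ι, (∀ i, f i ∈ G i) → ∀ β : Fin m → Finset (Fin n), (∀ l, (β l).Nonempty) →
        (∀ l l', l < l' → ∀ x ∈ β l, ∀ y ∈ β l', x < y) →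
          (fun l => ∑ i ∈ β l, val (G i, f i)) ∈ A) :
    ContainsBlockSums val ∅ A := by
  classical
  rintro s hs ⟨hpair, hsel⟩
  set L := (List.ofFn s).flatten
  have hsub (l) : (s l).Sublist L := List.sublist_flatten_of_mem (List.mem_ofFn.2 ⟨l, rfl⟩)
  have hmono (i j : Fin L.length) (hij : i < j) : (L.get i).1 ⊂ (L.get j).1 :=
    List.pairwise_iff_get.1 hpair i j hij
  have hsep (l l') (hll : l < l') (q) (hq : q ∈ s l) (q') (hq' : q' ∈ s l') : q.1 ⊂ q'.1 :=
    List.pairwise_ofFn.1 (List.pairwise_flatten.1 hpair).2 hll q hq q' hq'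
  have hnodup : L.Nodup := hpair.imp fun h heq => (heq ▸ h).ne rfl
  have hmem := hA L.length (le_length_flatten_ofFn hs) (fun i => (L.get i).1)
    (fun i => ⟨_, (hsel _ (L.get_mem i)).2⟩) hmono (fun i => (L.get i).2)
    (fun i => (hsel _ (L.get_mem i)).2) (fun l => {i | L.get i ∈ s l}) (fun l => ?_)
    fun l l' hll i hi j hj => ?_
  · convert hmem using 2 with l
    exact (sum_filter_get_mem hnodup (hsub l) val).symm
  · obtain ⟨q, hq⟩ := List.exists_mem_of_ne_nil _ (hs l)
    obtain ⟨i, rfl⟩ := List.get_of_mem ((hsub l).subset hq)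
    exact ⟨i, by simpa using hq⟩
  · by_contra! hji
    have hlt := hsep l l' hll _ (Finset.mem_filter.1 hi).2 _ (Finset.mem_filter.1 hj).2
    exact hlt.not_subset <| (StrictMono.monotone (f := fun i => (L.get i).1) hmono) hji

end Chains

section Trees

/-- A set `W` of finite sequences is a `𝓕`-tree if it contains the empty sequence and every
sequence in `W` can be extended within `W` by `𝓕`-almost every element. -/
def IsFilterTree {M : Type*} (𝓕 : Filter M) (W : Set (List M)) : Prop :=
  [] ∈ W ∧ ∀ h ∈ W, ∀ᶠ y in 𝓕, h ++ [y] ∈ W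

/-- The sequences all of whose nonempty initial segments have their sum `x` in `S` and are
followed by a member of `W x`. -/
def splitTree {M : Type*} [AddMonoid M] (S : Set M) (W : M → Set (List M)) : Set (List M) :=
  {h | ∀ t r, t ++ r = h → t ≠ [] → t.sum ∈ S ∧ r ∈ W t.sum}

theorem isFilterTree_splitTree {M : Type*} [AddMonoid M] {𝓕 : Filter M} {S : Set M}
    {W : M → Set (List M)} (hS : S ∈ 𝓕) (hadd : ∀ x ∈ S, ∀ᶠ y in 𝓕, x + y ∈ S)
    (hW : ∀ x ∈ S, IsFilterTree 𝓕 (W x)) : IsFilterTree 𝓕 (splitTree S W) := by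
  refine ⟨fun t r htr ht => absurd (List.append_eq_nil_iff.1 htr).1 ht, fun h hh => ?_⟩
  have hsum : ∀ᶠ y in 𝓕, (h ++ [y]).sum ∈ S := by
    rcases eq_or_ne h [] with rfl | hne
    · simpa using hS
    · simpa using hadd _ (hh h [] (List.append_nil h) hne).1
  have hrest : ∀ᶠ y in 𝓕, ∀ k : Fin (h.length + 1), h.take k ≠ [] →
      h.drop k ++ [y] ∈ W (h.take k).sum := by
    refine Filter.eventually_all.2 fun k => ?_
    by_cases hk : h.take k = []
    · exact .of_forall fun y hne => absurd hk hne
    · obtain ⟨hkS, hkW⟩ := hh _ _ (List.take_append_drop k h) hk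
      filter_upwards [(hW _ hkS).2 _ hkW] with y hy _ using hy
  filter_upwards [hsum, hrest] with y hy hyr t r htr ht
  rcases r.eq_nil_or_concat with rfl | ⟨r, z, rfl⟩
  · rw [List.append_nil] at htr
    subst htr
    exact ⟨hy, (hW _ hy).1⟩
  · rw [List.concat_eq_append, ← List.append_assoc] at htr
    obtain ⟨rfl, hzy⟩ := List.append_inj' htr rfl
    obtain rfl := List.singleton_inj.1 hzy
    have hr := hyr ⟨t.length, by simp⟩
    simp only [List.take_left, List.drop_left] at hr
    exact ⟨(hh t r rfl ht).1, by simpa using hr ht⟩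

theorem exists_isFilterTree_of_mem_tensor {p : Ultrafilter ℕ} (hp : IdempotentUF p) :
    ∀ {m : ℕ} {A : Set (Fin m → ℕ)}, A ∈ tensor m (fun _ => p) →
      ∃ W, IsFilterTree (p : Filter ℕ) W ∧ ∀ s : Fin m → List ℕ, (∀ l, s l ≠ []) →
        (List.ofFn s).flatten ∈ W → (fun l => (s l).sum) ∈ A
  | 0, _, hA =>
    ⟨Set.univ, by simp [IsFilterTree], fun _ _ _ => (mem_tensor_zero _).1 hA⟩
  | m + 1, A, hA => by
    let B : Set ℕ :=
      {x | {v : Fin m → ℕ | (Fin.cons x v : Fin (m + 1) → ℕ) ∈ A} ∈ tensor m fun _ => p}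
    choose! W hW hWA using fun x (hx : x ∈ B) => exists_isFilterTree_of_mem_tensor hp hx
    refine ⟨splitTree (starSet p B) W, isFilterTree_splitTree (starSet_mem hp hA)
      (fun x => eventually_add_mem_starSet hp) fun x hx => hW x hx.1, fun s hs hsW => ?_⟩
    rw [List.ofFn_succ, List.flatten_cons] at hsW
    obtain ⟨hx, hrest⟩ := hsW _ _ rfl (hs 0)
    have := hWA _ hx.1 (fun l => s l.succ) (fun l => hs l.succ) hrest
    rw [Set.mem_ofPred_eq] at this
    convert this using 1
    funext l
    cases l using Fin.cases <;> rfl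

end Trees

section Recursion

theorem exists_forall_lt_of_forall_finset_exists {ι δ : Type*} [Preorder ι] [WellFoundedLT ι]
    [LocallyFiniteOrderBot ι] (P : δ → Prop) (r : ι → δ → δ → Prop)
    (h : ∀ i (s : Finset δ), (∀ d ∈ s, P d) → ∃ e, P e ∧ ∀ d ∈ s, r i d e) :
    ∃ g : ι → δ, (∀ i, P (g i)) ∧ ∀ i j, i < j → r j (g i) (g j) := by
  classical
  have hstep (i : ι) (g : ∀ j, j < i → {d // P d}) :
      ∃ e : {d // P d}, ∀ j (hj : j < i), r i (g j hj) e := by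
    let earlier (j : Finset.Iio i) : δ := g j (Finset.mem_Iio.1 j.2)
    obtain ⟨e, he, hr⟩ := h i (Finset.univ.image earlier) fun d hd => by
      obtain ⟨j, -, rfl⟩ := Finset.mem_image.1 hd
      exact (g j _).2
    exact ⟨⟨e, he⟩, fun j hj =>
      hr _ (Finset.mem_image_of_mem earlier (Finset.mem_univ ⟨j, Finset.mem_Iio.2 hj⟩))⟩
  choose step hr using hstep
  let g : ι → {d // P d} := wellFounded_lt.fix step
  have hg (j : ι) : g j = step j fun i _ => g i := wellFounded_lt.fix_eq step j
  refine ⟨fun i => g i, fun i => (g i).2, fun i j hij => ?_⟩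
  have hrj := hr j (fun i _ => g i) i hij
  rwa [← hg j] at hrj

/-- The value `α(G) + ∑_{t ∈ H(G)} f(t)` attached to a set `G` and a member `f` of it. -/
def chainValue (α : Finset (ℕ → ℕ) → ℕ) (H : Finset (ℕ → ℕ) → Finset ℕ)
    (q : Finset (ℕ → ℕ) × (ℕ → ℕ)) : ℕ :=
  α q.1 + ∑ t ∈ H q.1, q.2 t

theorem isJSet_chainSums {α : Finset (ℕ → ℕ) → ℕ} {H : Finset (ℕ → ℕ) → Finset ℕ}
    (hH : ∀ F : Finset (ℕ → ℕ), F.Nonempty → (H F).Nonempty) (F : Finset (ℕ → ℕ)) :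
    IsJSet (chainSums (chainValue α H) F) := by
  classical
  intro E _
  obtain ⟨g, hg⟩ := Infinite.exists_notMem_finset F
  let G := insert g (F ∪ E)
  have hFG : F ⊂ G := (Finset.ssubset_insert hg).trans_subset
    (Finset.insert_subset_insert g Finset.subset_union_left)
  refine ⟨α G, H G, hH G (Finset.insert_nonempty _ _), fun f hf => ⟨[(G, f)], by simp, ?_, ?_⟩⟩
  · simp [IsChainAbove, hFG, G, hf]
  · simp [chainValue]

/-- The data chosen at a finite set of functions: the translate, the index set of the sums, and
a finite set of sequences of values: the empty one and those along the chains that end there. -/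
structure Stage where
  shift : ℕ
  support : Finset ℕ
  histories : Finset (List ℕ)

theorem exists_stages {p : Ultrafilter ℕ} (hJ : MemJ p) {W : Set (List ℕ)}
    (hW : IsFilterTree (p : Filter ℕ) W) :
    ∃ g : Finset (ℕ → ℕ) → Stage,
      (∀ F, (g F).support.Nonempty ∧ [] ∈ (g F).histories ∧ ∀ h ∈ (g F).histories, h ∈ W) ∧
      ∀ F G, F ⊂ G → (∀ x ∈ (g F).support, ∀ y ∈ (g G).support, x < y) ∧
        ∀ h ∈ (g F).histories, ∀ f ∈ G,
          h ++ [(g G).shift + ∑ t ∈ (g G).support, f t] ∈ (g G).histories := by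
  classical
  refine exists_forall_lt_of_forall_finset_exists
    (fun d : Stage => d.support.Nonempty ∧ [] ∈ d.histories ∧ ∀ h ∈ d.histories, h ∈ W)
    (fun (G : Finset (ℕ → ℕ)) d e => (∀ x ∈ d.support, ∀ y ∈ e.support, x < y) ∧
      ∀ h ∈ d.histories, ∀ f ∈ G, h ++ [e.shift + ∑ t ∈ e.support, f t] ∈ e.histories)
    fun G s hs => ?_
  let T : Finset (List ℕ) := s.biUnion Stage.histories
  have hT : ∀ h ∈ T, h ∈ W := fun h hh =>
    let ⟨d, hd, hhd⟩ := Finset.mem_biUnion.1 hh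
    (hs d hd).2.2 h hhd
  have hext : ∀ᶠ y in (p : Filter ℕ), ∀ h ∈ T, h ++ [y] ∈ W :=
    (Filter.eventually_all_finset T).2 fun h hh => hW.2 h (hT h hh)
  obtain ⟨a, β, hβ, hlt, hmem⟩ :=
    (hJ _ hext).exists_forall_lt G ((s.biUnion Stage.support).sup id)
  let extend (h : List ℕ) (f : ℕ → ℕ) : List ℕ := h ++ [a + ∑ t ∈ β, f t]
  refine ⟨⟨a, β, insert [] (Finset.image₂ extend T G)⟩,
    ⟨hβ, Finset.mem_insert_self _ _, ?_⟩, fun d hd => ⟨fun x hx y hy => ?_, fun h hh f hf => ?_⟩⟩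
  · simp only [Finset.forall_mem_insert, Finset.forall_mem_image₂]
    exact ⟨hW.1, fun h hh f hf => hmem f hf h hh⟩
  · exact (Finset.le_sup (f := id) (Finset.mem_biUnion.2 ⟨d, hd, hx⟩)).trans_lt (hlt y hy)
  · exact Finset.mem_insert_of_mem <|
      Finset.mem_image₂_of_mem (Finset.mem_biUnion.2 ⟨d, hd, hh⟩) hf

theorem exists_forall_isChainAbove_map_mem {p : Ultrafilter ℕ} (hJ : MemJ p) {W : Set (List ℕ)}
    (hW : IsFilterTree (p : Filter ℕ) W) :
    ∃ (α : Finset (ℕ → ℕ) → ℕ) (H : Finset (ℕ → ℕ) → Finset ℕ),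
      (∀ F, (H F).Nonempty) ∧ (∀ F G, F ⊂ G → ∀ x ∈ H F, ∀ y ∈ H G, x < y) ∧
        ∀ L, IsChainAbove ∅ L → L.map (chainValue α H) ∈ W := by
  obtain ⟨g, hg, hlt⟩ := exists_stages hJ hW
  let val := chainValue (fun F => (g F).shift) fun F => (g F).support
  have hhist (L) (hL : IsChainAbove ∅ L) :
      ∃ F, L.map val ∈ (g F).histories ∧ (F = ∅ ∨ ∃ q ∈ L, q.1 = F) := by
    induction L using List.reverseRecOn with
    | nil => exact ⟨∅, (hg ∅).2.1, .inl rfl⟩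
    | append_singleton L q ih =>
      obtain ⟨hpair, hsel⟩ := hL
      obtain ⟨hpairL, -, hlast⟩ := List.pairwise_append.1 hpair
      obtain ⟨F, hF, htop⟩ := ih ⟨hpairL, fun q' hq' => hsel q' (List.mem_append_left _ hq')⟩
      have hq := hsel q (by simp)
      have hFq : F ⊂ q.1 := by
        rcases htop with rfl | ⟨q', hq', rfl⟩
        · exact hq.1
        · exact hlast q' hq' q (List.mem_singleton_self q)
      refine ⟨q.1, ?_, .inr ⟨q, by simp, rfl⟩⟩
      rw [List.map_append]
      exact (hlt F q.1 hFq).2 _ hF _ hq.2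
  refine ⟨fun F => (g F).shift, fun F => (g F).support, fun F => (hg F).1,
    fun F G hFG => (hlt F G hFG).1, fun L hL => ?_⟩
  obtain ⟨F, hF, -⟩ := hhist L hL
  exact (hg F).2.2 _ hF

end Recursion

/-- Multidimensional Stronger Central Sets Theorem I (finitary form). -/
theorem multidimensional_stronger_CST_I (m : ℕ) (hm : 1 ≤ m) (A : Set (Fin m → ℕ)) :
    (∃ (α : Finset (ℕ → ℕ) → ℕ) (H : Finset (ℕ → ℕ) → Finset ℕ),
      (∀ F : Finset (ℕ → ℕ), F.Nonempty → (H F).Nonempty) ∧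
      (∀ F G : Finset (ℕ → ℕ), F.Nonempty → F ⊂ G →
        ∀ x ∈ H F, ∀ y ∈ H G, x < y) ∧
      (∀ n : ℕ, m ≤ n → ∀ G : Fin n → Finset (ℕ → ℕ),
        (∀ i, (G i).Nonempty) → (∀ i j, i < j → G i ⊂ G j) →
        ∀ f : Fin n → ℕ → ℕ, (∀ i, f i ∈ G i) →
        ∀ β : Fin m → Finset (Fin n),
          (∀ l, (β l).Nonempty) →
          (∀ l l' : Fin m, l < l' → ∀ x ∈ β l, ∀ y ∈ β l', x < y) →
          (fun l => ∑ i ∈ β l, (α (G i) + ∑ t ∈ H (G i), f i t)) ∈ A))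
    ↔
    (∃ p : Ultrafilter ℕ, IdempotentUF p ∧ MemJ p ∧ A ∈ tensor m fun _ => p) := by
  constructor
  · rintro ⟨α, H, hH, -, hA⟩
    obtain ⟨p, hp, hJ, hsums⟩ := exists_idempotent_memJ (antitone_chainSums (chainValue α H))
      (isJSet_chainSums hH) fun _ _ => exists_add_mem_chainSums
    have hblocks : ContainsBlockSums (chainValue α H) ∅ A :=
      containsBlockSums_of_forall_sum_mem hA
    exact ⟨p, hp, hJ, hblocks.mem_tensor fun _ => hsums⟩
  · rintro ⟨p, hp, hJ, hA⟩
    obtain ⟨W, hW, hWA⟩ := exists_isFilterTree_of_mem_tensor hp hA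
    obtain ⟨α, H, hH, hlt, hchain⟩ := exists_forall_isChainAbove_map_mem hJ hW
    have hblocks : ContainsBlockSums (chainValue α H) ∅ A := fun s hs hL =>
      hWA (fun l => (s l).map (chainValue α H)) (fun l => by simpa using hs l)
        (by simpa [List.map_flatten, List.map_ofFn, Function.comp_def] using hchain _ hL)
    refine ⟨α, H, fun F _ => hH F, fun F G _ => hlt F G, ?_⟩
    intro n _ G _ hG f hf β hβ hββ
    exact hblocks.sum_mem (fun i j => hG i j) hf hβ hββ

end MultiCST
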